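/- Let M be a von Neumann algebra with a faithful normal semifinite trace τ and let α ∈ M^n (n ≥ 1) be a commuting self-adjoint n-tuple. Then the quasicentral modulus of α relative to the uniform norm vanishes: k_M(α) = 0. Explicitly, for every a ∈ F₁⁺(M) and every ε > 0 there exists r ∈ F₁⁺(M) with r ≥ a and ‖[r, α(j)]‖ ≤ ε for all 1 ≤ j ≤ n. -/

import Mathlib

open ContinuousLinearMap Filter Topology

noncomputable section

namespace VNA

variable {H : Type*} [NormedAddCommGroup H] [InnerProductSpace ℂ H] [CompleteSpace H]

/-- A projection (orthogonal projection): idempotent and self-adjoint. -/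
def IsProjection (p : H →L[ℂ] H) : Prop := p * p = p ∧ star p = p

/-- Murray–von Neumann equivalence of `p` and `q` relative to `M`. -/
def MvNE (M : VonNeumannAlgebra H) (p q : H →L[ℂ] H) : Prop :=
  ∃ v ∈ M, star v * v = p ∧ v * star v = q

/-- `p` is a finite projection of `M`; for projections, `q ≤ p` is the range
containment `p * q = q`. -/
def IsFiniteProjection (M : VonNeumannAlgebra H) (p : H →L[ℂ] H) : Prop :=
  p ∈ M ∧ IsProjection p ∧
    ∀ q, q ∈ M → IsProjection q → p * q = q → MvNE M q p → q = p

def IsInfiniteProjection (M : VonNeumannAlgebra H) (p : H →L[ℂ] H) : Prop :=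
  p ∈ M ∧ IsProjection p ∧ ¬ IsFiniteProjection M p

/-- The centre `Z(M) = M ∩ M'` as a set. -/
def centerSet (M : VonNeumannAlgebra H) : Set (H →L[ℂ] H) :=
  {z | z ∈ M ∧ ∀ y ∈ M, z * y = y * z}

def IsCentralProjection (M : VonNeumannAlgebra H) (z : H →L[ℂ] H) : Prop :=
  IsProjection z ∧ z ∈ centerSet M

def IsProperlyInfiniteProjection (M : VonNeumannAlgebra H) (p : H →L[ℂ] H) : Prop :=
  p ∈ M ∧ IsProjection p ∧
    ∀ z, IsCentralProjection M z → z * p ≠ 0 → IsInfiniteProjection M (z * p)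

def ProperlyInfinite (M : VonNeumannAlgebra H) : Prop :=
  IsProperlyInfiniteProjection M 1

/-- `M` is σ-finite: every family of pairwise orthogonal nonzero projections in `M`
is countable. -/
def SigmaFinite (M : VonNeumannAlgebra H) : Prop :=
  ∀ S : Set (H →L[ℂ] H), (∀ p ∈ S, p ∈ M ∧ IsProjection p ∧ p ≠ 0) →
    (∀ p ∈ S, ∀ q ∈ S, p ≠ q → p * q = 0) → S.Countable

/-- A faithful normal semifinite trace on `M`. -/
structure IsFNSTrace (M : VonNeumannAlgebra H) (τ : (H →L[ℂ] H) → ENNReal) : Prop where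
  map_zero : τ 0 = 0
  additive : ∀ x y : H →L[ℂ] H, x ∈ M → y ∈ M → 0 ≤ x → 0 ≤ y → τ (x + y) = τ x + τ y
  homogeneous : ∀ (c : ℝ) (x : H →L[ℂ] H), 0 ≤ c → x ∈ M → 0 ≤ x →
    τ (c • x) = ENNReal.ofReal c * τ x
  tracial : ∀ x : H →L[ℂ] H, x ∈ M → τ (star x * x) = τ (x * star x)
  faithful : ∀ x : H →L[ℂ] H, x ∈ M → 0 ≤ x → τ x = 0 → x = 0
  normal : ∀ (ι : Type*) [Preorder ι] [IsDirected ι (· ≤ ·)] [Nonempty ι]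
      (f : ι → (H →L[ℂ] H)) (x : H →L[ℂ] H),
      (∀ i, f i ∈ M) → (∀ i, 0 ≤ f i) → Monotone f → (∃ C : ℝ, ∀ i, ‖f i‖ ≤ C) →
      x ∈ M → IsLUB (Set.range f) x → τ x = ⨆ i, τ (f i)
  semifinite : ∀ x : H →L[ℂ] H, x ∈ M → 0 ≤ x → x ≠ 0 →
      ∃ y, y ∈ M ∧ 0 ≤ y ∧ y ≤ x ∧ y ≠ 0 ∧ τ y < ⊤

/-- `p` is a `τ`-finite projection of `M`. -/
def IsTauFiniteProjection (M : VonNeumannAlgebra H) (τ : (H →L[ℂ] H) → ENNReal)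
    (p : H →L[ℂ] H) : Prop :=
  p ∈ M ∧ IsProjection p ∧ τ p < ⊤

/-- `F₁⁺(M) = {x ∈ M : 0 ≤ x ≤ 1, px = x for some τ-finite projection p}`. -/
def F1plus (M : VonNeumannAlgebra H) (τ : (H →L[ℂ] H) → ENNReal) : Set (H →L[ℂ] H) :=
  {x | x ∈ M ∧ 0 ≤ x ∧ x ≤ 1 ∧ ∃ p, IsTauFiniteProjection M τ p ∧ p * x = x}

/-- `K(M,τ)`: operator-norm closure of the τ-finitely supported elements of `M`. -/
def Kideal (M : VonNeumannAlgebra H) (τ : (H →L[ℂ] H) → ENNReal) : Set (H →L[ℂ] H) :=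
  closure {x | x ∈ M ∧ ∃ p, IsTauFiniteProjection M τ p ∧ p * x = x}

/-- A commuting self-adjoint `n`-tuple in `M`. -/
def IsCommutingSelfAdjointTuple (M : VonNeumannAlgebra H) {n : ℕ}
    (α : Fin n → (H →L[ℂ] H)) : Prop :=
  (∀ j, α j ∈ M) ∧ (∀ j, star (α j) = α j) ∧ ∀ i j, α i * α j = α j * α i

/-- `‖[r,α]‖ = max_{1≤j≤n} ‖[r, α(j)]‖`. -/
def commNorm {n : ℕ} (α : Fin n → (H →L[ℂ] H)) (r : H →L[ℂ] H) : ℝ :=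
  ⨆ j, ‖r * α j - α j * r‖

/-- `WZ*(S)`: the double commutant in `B(H)` of `S ∪ Z(M)`. -/
def WZstar (M : VonNeumannAlgebra H) (S : Set (H →L[ℂ] H)) : Set (H →L[ℂ] H) :=
  Set.centralizer (Set.centralizer (S ∪ centerSet M))

/-- A diagonal operator of `M`: `d = Σ_k λ_k p_k` with pairwise orthogonal
projections `p_k ∈ M`, the series converging in the strong operator topology. -/
def IsDiagonal (M : VonNeumannAlgebra H) (d : H →L[ℂ] H) : Prop :=
  ∃ (p : ℕ → H →L[ℂ] H) (lam : ℕ → ℂ),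
    (∀ k, p k ∈ M) ∧ (∀ k, IsProjection (p k)) ∧
    (∀ k l, k ≠ l → p k * p l = 0) ∧
    ∀ ξ : H, HasSum (fun k => lam k • (p k ξ)) (d ξ)

end VNA

/-
Let `p` be a `τ`-finite projection supporting `a`. Any `τ`-finite projection `q ≥ p` dominates `a`,
so it is enough to find one that almost commutes with every `α j`. In the abelian von Neumann
algebra generated by `α`, each `α j` is a norm limit of linear combinations of projections, so `q`
only has to commute with finitely many commuting projections `e`. For a single `e`, the sum of the
range projections of `e p` and `(1 - e) p` commutes with `e`, dominates `p` and has trace at most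
`2 τ(p)`, because the range projections of `x` and `x*` are Murray–von Neumann equivalent. It also
commutes with every self-adjoint operator commuting with `e` and `p`, so the projections `e` can
be treated one after the other.
-/

namespace VNA

section RangeProjection

variable {𝕜 E : Type*} [RCLike 𝕜] [NormedAddCommGroup E] [InnerProductSpace 𝕜 E]
  [CompleteSpace E] {p x y z : E →L[𝕜] E}

/-- The range projection (left support) of `x`: the orthogonal projection onto the closure of the
range of `x`. -/
def rangeProj (x : E →L[𝕜] E) : E →L[𝕜] E :=
  (LinearMap.range (x : E →ₗ[𝕜] E)).topologicalClosure.starProjection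

lemma isStarProjection_rangeProj (x : E →L[𝕜] E) : IsStarProjection (rangeProj x) :=
  isStarProjection_starProjection

lemma rangeProj_mul_self (x : E →L[𝕜] E) : rangeProj x * x = x := by
  ext ξ
  exact Submodule.starProjection_eq_self_iff.2
    (Submodule.le_topologicalClosure _ (LinearMap.mem_range_self (x : E →ₗ[𝕜] E) ξ))

lemma rangeProj_apply_mem_closure (x : E →L[𝕜] E) (ξ : E) :
    rangeProj x ξ ∈ closure (Set.range x) := by
  have h := Submodule.starProjection_apply_mem
    (LinearMap.range (x : E →ₗ[𝕜] E)).topologicalClosure ξ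
  rwa [← SetLike.mem_coe, Submodule.topologicalClosure_coe] at h

lemma mul_rangeProj_congr (h : y * x = z * x) : y * rangeProj x = z * rangeProj x := by
  ext ξ
  have hclosed : IsClosed {η : E | y η = z η} := isClosed_eq y.continuous z.continuous
  have hrange : Set.range x ⊆ {η : E | y η = z η} := by
    rintro _ ⟨η, rfl⟩
    exact DFunLike.congr_fun h η
  exact closure_minimal hrange hclosed (rangeProj_apply_mem_closure x ξ)

lemma mul_rangeProj_of_mul_eq (h : p * x = x) : p * rangeProj x = rangeProj x := by
  rw [mul_rangeProj_congr (h.trans (one_mul x).symm), one_mul]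

lemma rangeProj_eq_of_mul_eq {a b : E →L[𝕜] E} (hxy : x * a = y) (hyx : y * b = x) :
    rangeProj x = rangeProj y := by
  have hrange : LinearMap.range (x : E →ₗ[𝕜] E) = LinearMap.range (y : E →ₗ[𝕜] E) := by
    apply le_antisymm
    · rintro _ ⟨ξ, rfl⟩
      exact ⟨b ξ, DFunLike.congr_fun hyx ξ⟩
    · rintro _ ⟨ξ, rfl⟩
      exact ⟨a ξ, DFunLike.congr_fun hxy ξ⟩
  simp only [rangeProj, hrange]

lemma mul_rangeProj_eq_of_commute (h : Commute y x) :
    rangeProj x * y * rangeProj x = y * rangeProj x :=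
  mul_rangeProj_congr (by rw [mul_assoc, h.eq, ← mul_assoc, rangeProj_mul_self])

lemma commute_rangeProj (h : Commute y x) (h' : Commute (star y) x) :
    Commute y (rangeProj x) := by
  have hstar := congrArg star (mul_rangeProj_eq_of_commute h')
  simp only [star_mul, star_star, (isStarProjection_rangeProj x).isSelfAdjoint.star_eq] at hstar
  calc y * rangeProj x = rangeProj x * y * rangeProj x := (mul_rangeProj_eq_of_commute h).symm
    _ = rangeProj x * y := by rw [mul_assoc, hstar]

lemma mul_rangeProj_eq_zero (h : y * x = 0) : y * rangeProj x = 0 := by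
  rw [mul_rangeProj_congr (h.trans (zero_mul x).symm), zero_mul]

lemma rangeProj_mul_eq_zero (h : star x * y = 0) : rangeProj x * y = 0 := by
  have hstar : star y * x = 0 := by simpa using congrArg star h
  simpa [(isStarProjection_rangeProj x).isSelfAdjoint.star_eq]
    using congrArg star (mul_rangeProj_eq_zero hstar)

lemma rangeProj_mul_rangeProj_eq_zero (h : star x * y = 0) : rangeProj x * rangeProj y = 0 :=
  mul_rangeProj_eq_zero (rangeProj_mul_eq_zero h)

-- Douglas factorization.
lemma exists_mul_eq_of_norm_le {C : ℝ} (h : ∀ ξ, ‖x ξ‖ ≤ C * ‖y ξ‖) :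
    ∃ v : E →L[𝕜] E, v * y = x := by
  let K := (LinearMap.range (y : E →ₗ[𝕜] E)).topologicalClosure
  let e : E →ₗ[𝕜] K := (y : E →ₗ[𝕜] E).codRestrict K fun ξ ↦
    Submodule.le_topologicalClosure _ (LinearMap.mem_range_self _ ξ)
  have he : DenseRange e := by
    rw [DenseRange, Subtype.dense_iff, ← Set.range_comp]
    exact (Submodule.topologicalClosure_coe _).le
  refine ⟨(x : E →ₗ[𝕜] E).extendOfNorm e ∘L K.orthogonalProjectionOnto, ?_⟩
  ext ξ
  calc (x : E →ₗ[𝕜] E).extendOfNorm e (K.orthogonalProjectionOnto (e ξ))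
      = (x : E →ₗ[𝕜] E).extendOfNorm e (e ξ) := by
        rw [Submodule.orthogonalProjectionOnto_mem_subspace_eq_self]
    _ = x ξ := LinearMap.extendOfNorm_eq he ⟨C, h⟩ ξ

end RangeProjection

section PartialIsometry

variable {𝕜 E : Type*} [RCLike 𝕜] [NormedAddCommGroup E] [InnerProductSpace 𝕜 E]
  [CompleteSpace E] {v x y : E →L[𝕜] E}

lemma norm_apply_eq_of_star_mul_self_eq (h : star x * x = star y * y) (ξ : E) :
    ‖x ξ‖ = ‖y ξ‖ := by
  rw [apply_norm_eq_sqrt_inner_adjoint_left x, apply_norm_eq_sqrt_inner_adjoint_left y]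
  exact congrArg (fun z : E →L[𝕜] E ↦ √(RCLike.re (inner 𝕜 (z ξ) ξ))) h

lemma exists_mul_eq_of_star_mul_self_eq (h : star x * x = star y * y) :
    ∃ v : E →L[𝕜] E, v * y = x ∧ v * rangeProj y = v := by
  obtain ⟨v, hv⟩ := exists_mul_eq_of_norm_le (C := 1) fun ξ ↦
    ((norm_apply_eq_of_star_mul_self_eq h ξ).trans (one_mul _).symm).le
  refine ⟨v * rangeProj y, ?_, ?_⟩
  · rw [mul_assoc, rangeProj_mul_self, hv]
  · rw [mul_assoc, (isStarProjection_rangeProj y).isIdempotentElem.eq]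

lemma star_mul_self_eq_rangeProj (h : star x * x = star y * y) (hvy : v * y = x)
    (hv : v * rangeProj y = v) : star v * v = rangeProj y := by
  have hr : star (rangeProj y) = rangeProj y := (isStarProjection_rangeProj y).isSelfAdjoint
  have hstar : (star y * (star v * v)) * y = star y * y := by
    rw [← h, ← hvy, star_mul]; simp only [mul_assoc]
  have hleft : star y * (star v * v) = star y * rangeProj y := by
    calc star y * (star v * v) = star y * (star v * v) * rangeProj y := by
          simp only [mul_assoc, hv]
      _ = star y * rangeProj y := mul_rangeProj_congr hstar
  have hright : star v * v * y = rangeProj y * y := by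
    simpa only [star_mul, star_star, hr] using congrArg star hleft
  calc star v * v = star v * v * rangeProj y := by rw [mul_assoc, hv]
    _ = rangeProj y * rangeProj y := mul_rangeProj_congr hright
    _ = rangeProj y := (isStarProjection_rangeProj y).isIdempotentElem.eq

lemma mul_star_self_eq_rangeProj (h : star x * x = star y * y) (hvy : v * y = x)
    (hv : v * rangeProj y = v) : v * star v = rangeProj x := by
  have hfix : v * star v * x = x := by
    rw [← hvy, ← mul_assoc, mul_assoc v, star_mul_self_eq_rangeProj h hvy hv, hv]
  have hrange : rangeProj x * v = v := by
    calc rangeProj x * v = rangeProj x * v * rangeProj y := by rw [mul_assoc, hv]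
      _ = v * rangeProj y :=
        mul_rangeProj_congr (by rw [mul_assoc, hvy, rangeProj_mul_self])
      _ = v := hv
  calc v * star v = star (rangeProj x * v * star v) := by simp [hrange]
    _ = v * star v * rangeProj x := by
      simp only [star_mul, star_star, (isStarProjection_rangeProj x).isSelfAdjoint.star_eq,
        mul_assoc]
    _ = rangeProj x := mul_rangeProj_of_mul_eq hfix

end PartialIsometry

variable {H : Type*} [NormedAddCommGroup H] [InnerProductSpace ℂ H] [CompleteSpace H]

section Membership

variable {M : VonNeumannAlgebra H} {x y v : H →L[ℂ] H}

lemma mem_of_forall_commute (h : ∀ z ∈ M.commutant, Commute z x) : x ∈ M := by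
  rw [← M.commutant_commutant, VonNeumannAlgebra.mem_commutant_iff]
  exact h

lemma commute_of_mem_commutant (hx : x ∈ M) (hy : y ∈ M.commutant) : Commute y x :=
  (VonNeumannAlgebra.mem_commutant_iff.1 hy x hx).symm

lemma rangeProj_mem (hx : x ∈ M) : rangeProj x ∈ M :=
  mem_of_forall_commute fun _ hz ↦
    commute_rangeProj (commute_of_mem_commutant hx hz)
      (commute_of_mem_commutant hx (star_mem hz))

lemma cfcAbs_mem (hx : x ∈ M) : CFC.abs x ∈ M :=
  mem_of_forall_commute fun _ hz ↦
    Commute.cfcAbs_right (commute_of_mem_commutant hx hz).symm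
      (commute_of_mem_commutant hx (star_mem hz)).symm

lemma posPart_mem (hx : x ∈ M) : x⁺ ∈ M :=
  mem_of_forall_commute fun _ hz ↦ by
    rw [CFC.posPart_def]
    exact ((commute_of_mem_commutant hx hz).symm.cfcₙ_real _).symm

lemma mem_of_mul_mem (hy : y ∈ M) (hvy : v * y ∈ M) (hv : v * rangeProj y = v) : v ∈ M :=
  mem_of_forall_commute fun z hz ↦ by
    have hzy : Commute z y := commute_of_mem_commutant hy hz
    have hzr : Commute z (rangeProj y) := commute_of_mem_commutant (rangeProj_mem hy) hz
    have hmul : z * v * y = v * z * y := by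
      rw [mul_assoc, (commute_of_mem_commutant hvy hz).eq, mul_assoc, mul_assoc, hzy.eq]
    calc z * v = z * v * rangeProj y := by rw [mul_assoc, hv]
      _ = v * z * rangeProj y := mul_rangeProj_congr hmul
      _ = v * z := by rw [mul_assoc, hzr.eq, ← mul_assoc, hv]

end Membership

section PolarDecomposition

variable {M : VonNeumannAlgebra H} {x : H →L[ℂ] H}

lemma star_cfcAbs_mul_cfcAbs (x : H →L[ℂ] H) :
    star (CFC.abs x) * CFC.abs x = star x * x := by
  rw [(CFC.abs_nonneg x).isSelfAdjoint.star_eq, CFC.abs_mul_abs]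

lemma rangeProj_cfcAbs (x : H →L[ℂ] H) : rangeProj (CFC.abs x) = rangeProj (star x) := by
  have habs : star (CFC.abs x) = CFC.abs x := (CFC.abs_nonneg x).isSelfAdjoint
  obtain ⟨v, hvx, hv⟩ := exists_mul_eq_of_star_mul_self_eq (star_cfcAbs_mul_cfcAbs x).symm
  have hstar : star v * x = CFC.abs x := by
    rw [← hvx, ← mul_assoc, star_mul_self_eq_rangeProj (star_cfcAbs_mul_cfcAbs x).symm hvx hv,
      hvx, rangeProj_mul_self]
  apply rangeProj_eq_of_mul_eq (a := star v) (b := v)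
  · simpa [habs] using congrArg star hvx
  · simpa [habs] using congrArg star hstar

lemma mvNE_rangeProj (hx : x ∈ M) : MvNE M (rangeProj (star x)) (rangeProj x) := by
  have habs := (star_cfcAbs_mul_cfcAbs x).symm
  obtain ⟨v, hvx, hv⟩ := exists_mul_eq_of_star_mul_self_eq habs
  refine ⟨v, mem_of_mul_mem (cfcAbs_mem hx) (by rwa [hvx]) hv, ?_,
    mul_star_self_eq_rangeProj habs hvx hv⟩
  rw [star_mul_self_eq_rangeProj habs hvx hv, rangeProj_cfcAbs]

end PolarDecomposition

section Trace

/-- `τ` restricts to a trace on the positive cone of `M`. Unlike in `IsFNSTrace`, it need not be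
faithful, normal or semifinite. -/
structure IsTrace (M : VonNeumannAlgebra H) (τ : (H →L[ℂ] H) → ENNReal) : Prop where
  map_zero : τ 0 = 0
  additive : ∀ x y : H →L[ℂ] H, x ∈ M → y ∈ M → 0 ≤ x → 0 ≤ y → τ (x + y) = τ x + τ y
  homogeneous : ∀ (c : ℝ) (x : H →L[ℂ] H), 0 ≤ c → x ∈ M → 0 ≤ x →
    τ (c • x) = ENNReal.ofReal c * τ x
  tracial : ∀ x : H →L[ℂ] H, x ∈ M → τ (star x * x) = τ (x * star x)

variable {M : VonNeumannAlgebra H} {τ : (H →L[ℂ] H) → ENNReal} {p q x y : H →L[ℂ] H}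

lemma IsFNSTrace.isTrace (hτ : IsFNSTrace M τ) : IsTrace M τ :=
  ⟨hτ.map_zero, hτ.additive, hτ.homogeneous, hτ.tracial⟩

lemma isProjection_iff_isStarProjection : IsProjection p ↔ IsStarProjection p :=
  ⟨fun h ↦ ⟨h.1, h.2⟩, fun h ↦ ⟨h.isIdempotentElem, h.isSelfAdjoint⟩⟩

lemma IsTauFiniteProjection.isStarProjection (hp : IsTauFiniteProjection M τ p) :
    IsStarProjection p :=
  isProjection_iff_isStarProjection.1 hp.2.1

lemma IsTauFiniteProjection.mem_F1plus (hp : IsTauFiniteProjection M τ p) : p ∈ F1plus M τ :=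
  ⟨hp.1, hp.isStarProjection.nonneg, hp.isStarProjection.le_one, p, hp, hp.2.1.1⟩

lemma IsTrace.mono (hτ : IsTrace M τ) (hx : x ∈ M) (hy : y ∈ M) (hx₀ : 0 ≤ x) (hxy : x ≤ y) :
    τ x ≤ τ y := by
  have hadd := hτ.additive x (y - x) hx (sub_mem hy hx) hx₀ (sub_nonneg.2 hxy)
  rw [add_sub_cancel] at hadd
  exact hadd ▸ le_self_add

lemma IsTrace.eq_of_mvNE (hτ : IsTrace M τ) (h : MvNE M p q) : τ p = τ q := by
  obtain ⟨v, hv, rfl, rfl⟩ := h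
  exact hτ.tracial v hv

lemma IsTrace.rangeProj_le (hτ : IsTrace M τ) (hx : x ∈ M) (hp : p ∈ M)
    (hproj : IsStarProjection p) (hxp : x * p = x) : τ (rangeProj x) ≤ τ p := by
  have hpx : p * star x = star x := by
    simpa only [star_mul, hproj.isSelfAdjoint.star_eq] using congrArg star hxp
  have hle : rangeProj (star x) ≤ p :=
    (isStarProjection_rangeProj _).le_of_mul_eq_right hproj (mul_rangeProj_of_mul_eq hpx)
  calc τ (rangeProj x) = τ (rangeProj (star x)) := (hτ.eq_of_mvNE (mvNE_rangeProj hx)).symm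
    _ ≤ τ p := hτ.mono (rangeProj_mem (star_mem hx)) hp (isStarProjection_rangeProj _).nonneg hle

end Trace

section CommutingHull

variable {𝕜 E : Type*} [RCLike 𝕜] [NormedAddCommGroup E] [InnerProductSpace 𝕜 E]
  [CompleteSpace E] {b e p : E →L[𝕜] E}

/-- For projections `e` and `p`, the smallest projection that dominates `p` and commutes with `e`.
It is built from the parts of `p` under `e` and under `1 - e`, which makes its trace at most
twice that of `p`. -/
def commutingHull (e p : E →L[𝕜] E) : E →L[𝕜] E :=
  rangeProj (e * p) + rangeProj ((1 - e) * p)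

lemma rangeProj_mul_rangeProj_one_sub_mul (he : IsStarProjection e) :
    rangeProj (e * p) * rangeProj ((1 - e) * p) = 0 :=
  rangeProj_mul_rangeProj_eq_zero <| by
    rw [star_mul, he.isSelfAdjoint.star_eq, mul_assoc, ← mul_assoc e, he.mul_one_sub_self,
      zero_mul, mul_zero]

lemma isStarProjection_commutingHull (he : IsStarProjection e) :
    IsStarProjection (commutingHull e p) :=
  (isStarProjection_rangeProj _).add (isStarProjection_rangeProj _)
    (rangeProj_mul_rangeProj_one_sub_mul he)

lemma mul_commutingHull (he : IsStarProjection e) : e * commutingHull e p = rangeProj (e * p) := by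
  have hfst : e * rangeProj (e * p) = rangeProj (e * p) :=
    mul_rangeProj_of_mul_eq (by rw [← mul_assoc, he.isIdempotentElem.eq])
  have hsnd : (1 - e) * rangeProj ((1 - e) * p) = rangeProj ((1 - e) * p) :=
    mul_rangeProj_of_mul_eq (by rw [← mul_assoc, he.one_sub.isIdempotentElem.eq])
  rw [commutingHull, mul_add, hfst, ← hsnd, ← mul_assoc, he.mul_one_sub_self, zero_mul, add_zero]

lemma commutingHull_mul_mul (he : IsStarProjection e) : commutingHull e p * (e * p) = e * p := by
  calc commutingHull e p * (e * p)
      = e * p + rangeProj ((1 - e) * p) * rangeProj (e * p) * (e * p) := by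
        rw [commutingHull, add_mul, mul_assoc _ _ (e * p), rangeProj_mul_self]
    _ = e * p := by
      have h := rangeProj_mul_rangeProj_one_sub_mul (p := p) he.one_sub
      rw [sub_sub_cancel] at h
      rw [h, zero_mul, add_zero]

lemma commutingHull_one_sub (e p : E →L[𝕜] E) : commutingHull (1 - e) p = commutingHull e p := by
  rw [commutingHull, commutingHull, sub_sub_cancel, add_comm]

lemma commutingHull_mul (he : IsStarProjection e) : commutingHull e p * p = p := by
  have hsnd := commutingHull_mul_mul (p := p) he.one_sub
  rw [commutingHull_one_sub] at hsnd
  calc commutingHull e p * p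
      = commutingHull e p * (e * p) + commutingHull e p * ((1 - e) * p) := by
        rw [← mul_add, ← add_mul, add_sub_cancel, one_mul]
    _ = p := by rw [commutingHull_mul_mul he, hsnd, ← add_mul, add_sub_cancel, one_mul]

lemma commute_commutingHull_self (he : IsStarProjection e) : Commute e (commutingHull e p) := by
  rw [he.isSelfAdjoint.commute_iff (isStarProjection_commutingHull he).isSelfAdjoint,
    mul_commutingHull he]
  exact (isStarProjection_rangeProj _).isSelfAdjoint

lemma commute_commutingHull (hb : IsSelfAdjoint b) (hbe : Commute b e) (hbp : Commute b p) :
    Commute b (commutingHull e p) := by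
  have hrange {x : E →L[𝕜] E} (hx : Commute b x) : Commute b (rangeProj x) :=
    commute_rangeProj hx (by rwa [hb.star_eq])
  exact (hrange (hbe.mul_right hbp)).add_right
    (hrange (((Commute.one_right b).sub_right hbe).mul_right hbp))

end CommutingHull

section FiniteHull

variable {M : VonNeumannAlgebra H} {τ : (H →L[ℂ] H) → ENNReal} {e p : H →L[ℂ] H}

lemma isTauFiniteProjection_commutingHull (hτ : IsTrace M τ) (hp : IsTauFiniteProjection M τ p)
    (heM : e ∈ M) (he : IsStarProjection e) :
    IsTauFiniteProjection M τ (commutingHull e p) := by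
  obtain ⟨hpM, hpp, hpτ⟩ := hp
  have hproj := isProjection_iff_isStarProjection.1 hpp
  have hfst : e * p ∈ M := mul_mem heM hpM
  have hsnd : (1 - e) * p ∈ M := mul_mem (sub_mem (one_mem _) heM) hpM
  refine ⟨add_mem (rangeProj_mem hfst) (rangeProj_mem hsnd),
    isProjection_iff_isStarProjection.2 (isStarProjection_commutingHull he), ?_⟩
  have hle {y : H →L[ℂ] H} (hy : y * p ∈ M) : τ (rangeProj (y * p)) ≤ τ p :=
    hτ.rangeProj_le hy hpM hproj (by rw [mul_assoc, hpp.1])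
  calc τ (commutingHull e p) = τ (rangeProj (e * p)) + τ (rangeProj ((1 - e) * p)) :=
        hτ.additive _ _ (rangeProj_mem hfst) (rangeProj_mem hsnd)
          (isStarProjection_rangeProj _).nonneg (isStarProjection_rangeProj _).nonneg
    _ ≤ τ p + τ p := add_le_add (hle hfst) (hle hsnd)
    _ < ⊤ := ENNReal.add_lt_top.2 ⟨hpτ, hpτ⟩

lemma exists_isTauFiniteProjection_forall_commute (hτ : IsTrace M τ)
    (hp : IsTauFiniteProjection M τ p) {T : Set (H →L[ℂ] H)} (hT : T.Finite)
    (hTM : ∀ e ∈ T, e ∈ M) (hTproj : ∀ e ∈ T, IsStarProjection e)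
    (hTcomm : ∀ e ∈ T, ∀ f ∈ T, Commute e f) :
    ∃ q, IsTauFiniteProjection M τ q ∧ q * p = p ∧ ∀ e ∈ T, Commute e q := by
  induction T, hT using Set.Finite.induction_on with
  | empty => exact ⟨p, hp, hp.2.1.1, by simp⟩
  | @insert e T _ _ ih =>
    simp only [Set.forall_mem_insert] at hTM hTproj hTcomm
    obtain ⟨q, hq, hqp, hqT⟩ := ih hTM.2 hTproj.2 fun e' he' ↦ (hTcomm.2 e' he').2
    refine ⟨commutingHull e q, isTauFiniteProjection_commutingHull hτ hq hTM.1 hTproj.1, ?_, ?_⟩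
    · rw [← hqp, ← mul_assoc, commutingHull_mul hTproj.1]
    · rw [Set.forall_mem_insert]
      exact ⟨commute_commutingHull_self hTproj.1, fun f hf ↦ commute_commutingHull
        (hTproj.2 f hf).isSelfAdjoint (hTcomm.2 f hf).1 (hqT f hf)⟩

end FiniteHull

section Bisection

variable {A : Type*} [CStarAlgebra A] [PartialOrder A] [StarOrderedRing A] {a e : A}

lemma norm_sub_half_norm_smul_one_le (ha : 0 ≤ a) : ‖a - (‖a‖ / 2) • 1‖ ≤ ‖a‖ / 2 := by
  have hcfc : a - (‖a‖ / 2) • 1 = cfc (fun t : ℝ ↦ t - ‖a‖ / 2) a := by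
    rw [cfc_sub .., cfc_id' .., cfc_const .., Algebra.algebraMap_eq_smul_one]
  rw [hcfc]
  refine norm_cfc_le (by positivity) fun t ht ↦ ?_
  have h₀ : 0 ≤ t := spectrum_nonneg_of_nonneg ha ht
  have h₁ : t ≤ ‖a‖ :=
    (le_algebraMap_iff_spectrum_le ha.isSelfAdjoint).1
      ha.isSelfAdjoint.le_algebraMap_norm_self t ht
  rw [Real.norm_eq_abs, abs_le]
  constructor <;> linarith

lemma two_mul_sub_one_mul_cfcAbs (ha : IsSelfAdjoint a) (hpos : e * a⁺ = a⁺) (hneg : e * a⁻ = 0) :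
    (2 * e - 1) * CFC.abs a = a := by
  have hmul (x : A) : (2 * e - 1) * x = e * x + e * x - x := by noncomm_ring
  calc (2 * e - 1) * CFC.abs a = a⁺ - a⁻ := by
        rw [← CFC.posPart_add_negPart a, mul_add, hmul, hmul, hpos, hneg]; abel
    _ = a := CFC.posPart_sub_negPart a

-- `2 * e - 1` is the sign of `a`: multiplying by this unitary turns `a` into `|a|`, whose spectrum
-- lies within `‖a‖ / 2` of `‖a‖ / 2`.
lemma norm_sub_half_norm_smul_two_mul_sub_one_le (he : IsStarProjection e) (ha : IsSelfAdjoint a)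
    (hpos : e * a⁺ = a⁺) (hneg : e * a⁻ = 0) :
    ‖a - (‖a‖ / 2) • (2 * e - 1)‖ ≤ ‖a‖ / 2 := by
  have hfactor : a - (‖a‖ / 2) • (2 * e - 1)
      = (2 * e - 1) * (CFC.abs a - (‖CFC.abs a‖ / 2) • 1) := by
    rw [mul_sub, two_mul_sub_one_mul_cfcAbs ha hpos hneg, mul_smul_comm, mul_one, CFC.norm_abs]
  rw [hfactor, CStarRing.norm_mem_unitary_mul _ he.two_mul_sub_one_mem_unitary]
  exact (norm_sub_half_norm_smul_one_le (CFC.abs_nonneg a)).trans_eq (by rw [CFC.norm_abs])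

end Bisection

section SpanProjections

variable {M : VonNeumannAlgebra H} {a e x : H →L[ℂ] H}

/-- The set of projections of `M`. -/
def projections (M : VonNeumannAlgebra H) : Set (H →L[ℂ] H) :=
  {e | e ∈ M ∧ IsStarProjection e}

lemma rangeProj_posPart_mul_negPart (a : H →L[ℂ] H) : rangeProj a⁺ * a⁻ = 0 :=
  rangeProj_mul_eq_zero <| by
    rw [(CFC.posPart_nonneg a).isSelfAdjoint.star_eq, CFC.posPart_mul_negPart]

lemma mem_of_mem_span_projections (hx : x ∈ Submodule.span ℝ (projections M)) : x ∈ M :=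
  Submodule.span_le (p := M.toSubalgebra.toSubmodule.restrictScalars ℝ).2 (fun _ he ↦ he.1) hx

lemma isSelfAdjoint_of_mem_span_projections (hx : x ∈ Submodule.span ℝ (projections M)) :
    IsSelfAdjoint x :=
  Submodule.span_le (p := selfAdjoint.submodule ℝ _).2 (fun _ he ↦ he.2.isSelfAdjoint) hx

lemma smul_two_mul_sub_one_mem_span_projections (he : e ∈ projections M) (c : ℝ) :
    c • (2 * e - 1) ∈ Submodule.span ℝ (projections M) := by
  have hone : (1 : H →L[ℂ] H) ∈ projections M := ⟨one_mem M, .one _⟩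
  rw [two_mul]
  exact Submodule.smul_mem _ _ (sub_mem (add_mem (Submodule.subset_span he)
    (Submodule.subset_span he)) (Submodule.subset_span hone))

lemma exists_mem_span_projections_norm_sub_le (haM : a ∈ M) (ha : IsSelfAdjoint a) (n : ℕ) :
    ∃ s ∈ Submodule.span ℝ (projections M), ‖a - s‖ ≤ ‖a‖ / 2 ^ n := by
  induction n generalizing a with
  | zero => exact ⟨0, zero_mem _, by simp⟩
  | succ n ih =>
    have he : rangeProj a⁺ ∈ projections M :=
      ⟨rangeProj_mem (posPart_mem haM), isStarProjection_rangeProj _⟩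
    set u := (‖a‖ / 2) • (2 * rangeProj a⁺ - 1)
    have hu := smul_two_mul_sub_one_mem_span_projections he (‖a‖ / 2)
    have hnorm : ‖a - u‖ ≤ ‖a‖ / 2 :=
      norm_sub_half_norm_smul_two_mul_sub_one_le he.2 ha (rangeProj_mul_self _)
        (rangeProj_posPart_mul_negPart a)
    obtain ⟨s, hs, hle⟩ := ih (sub_mem haM (mem_of_mem_span_projections hu))
      (ha.sub (isSelfAdjoint_of_mem_span_projections hu))
    refine ⟨u + s, add_mem hu hs, ?_⟩
    calc ‖a - (u + s)‖ = ‖a - u - s‖ := by rw [sub_add_eq_sub_sub]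
      _ ≤ ‖a - u‖ / 2 ^ n := hle
      _ ≤ ‖a‖ / 2 / 2 ^ n := by gcongr
      _ = ‖a‖ / 2 ^ (n + 1) := by rw [div_div, pow_succ']

lemma mem_closure_span_projections_of_isSelfAdjoint (haM : a ∈ M) (ha : IsSelfAdjoint a) :
    a ∈ closure (Submodule.span ℝ (projections M) : Set (H →L[ℂ] H)) := by
  rw [Metric.mem_closure_iff]
  intro ε hε
  have hlim : Tendsto (fun n : ℕ ↦ ‖a‖ / 2 ^ n) atTop (𝓝 0) := by
    simpa only [div_eq_mul_inv, mul_zero, inv_pow] using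
      (tendsto_pow_atTop_nhds_zero_of_lt_one (r := (2 : ℝ)⁻¹) (by norm_num)
        (by norm_num)).const_mul ‖a‖
  obtain ⟨n, hn⟩ := (hlim.eventually_lt_const hε).exists
  obtain ⟨s, hs, hle⟩ := exists_mem_span_projections_norm_sub_le haM ha n
  exact ⟨s, hs, (dist_eq_norm a s).trans_lt (hle.trans_lt hn)⟩

lemma realPart_mem (ha : a ∈ M) : (realPart a : H →L[ℂ] H) ∈ M := by
  rw [realPart_apply_coe]
  exact (M.toSubalgebra.toSubmodule.restrictScalars ℝ).smul_mem _
    (add_mem ha (star_mem (s := M) ha))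

lemma imaginaryPart_mem (ha : a ∈ M) : (imaginaryPart a : H →L[ℂ] H) ∈ M := by
  rw [imaginaryPart_apply_coe]
  exact M.toSubalgebra.smul_mem ((M.toSubalgebra.toSubmodule.restrictScalars ℝ).smul_mem _
    (sub_mem ha (star_mem (s := M) ha))) _

lemma mem_closure_span_projections (haM : a ∈ M) :
    a ∈ closure (Submodule.span ℂ (projections M) : Set (H →L[ℂ] H)) := by
  have hsa {b : H →L[ℂ] H} (hbM : b ∈ M) (hb : IsSelfAdjoint b) :
      b ∈ (Submodule.span ℂ (projections M)).topologicalClosure :=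
    closure_mono (Submodule.span_le_restrictScalars ℝ ℂ (projections M))
      (mem_closure_span_projections_of_isSelfAdjoint hbM hb)
  rw [← realPart_add_I_smul_imaginaryPart a]
  exact add_mem (hsa (realPart_mem haM) (realPart a).2)
    (Submodule.smul_mem _ _ (hsa (imaginaryPart_mem haM) (imaginaryPart a).2))

end SpanProjections

section Commutator

lemma norm_commutator_le {A : Type*} [NormedRing A] {a q s : A} (hq : ‖q‖ ≤ 1)
    (hs : Commute s q) : ‖q * a - a * q‖ ≤ 2 * ‖a - s‖ := by
  calc ‖q * a - a * q‖ = ‖q * (a - s) - (a - s) * q‖ := by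
        rw [mul_sub, sub_mul, hs.eq, sub_sub_sub_cancel_right]
    _ ≤ ‖q * (a - s)‖ + ‖(a - s) * q‖ := norm_sub_le _ _
    _ ≤ ‖q‖ * ‖a - s‖ + ‖a - s‖ * ‖q‖ := add_le_add (norm_mul_le _ _) (norm_mul_le _ _)
    _ ≤ 1 * ‖a - s‖ + ‖a - s‖ * 1 := by gcongr
    _ = 2 * ‖a - s‖ := by ring

lemma commute_of_mem_span {R A : Type*} [CommSemiring R] [Semiring A] [Algebra R A] {S : Set A}
    {q s : A} (hs : s ∈ Submodule.span R S) (hq : ∀ e ∈ S, Commute e q) : Commute s q := by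
  induction hs using Submodule.span_induction with
  | mem e he => exact hq e he
  | zero => exact Commute.zero_left q
  | add s t _ _ ihs iht => exact ihs.add_left iht
  | smul c s _ ih => exact ih.smul_left c

variable {M : VonNeumannAlgebra H} {a : H →L[ℂ] H} {ε : ℝ}

lemma exists_finite_projections_norm_commutator_le (ha : a ∈ M) (hε : 0 < ε) :
    ∃ T ⊆ projections M, T.Finite ∧
      ∀ q : H →L[ℂ] H, ‖q‖ ≤ 1 → (∀ e ∈ T, Commute e q) → ‖q * a - a * q‖ ≤ ε := by
  obtain ⟨s, hs, hdist⟩ :=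
    Metric.mem_closure_iff.1 (mem_closure_span_projections ha) (ε / 2) (half_pos hε)
  obtain ⟨T, hT, hsT⟩ := Submodule.mem_span_finite_of_mem_span hs
  refine ⟨T, hT, T.finite_toSet, fun q hq hcomm ↦ ?_⟩
  calc ‖q * a - a * q‖ ≤ 2 * ‖a - s‖ := norm_commutator_le hq (commute_of_mem_span hsT hcomm)
    _ ≤ ε := by rw [← dist_eq_norm]; linarith

end Commutator

section GeneratedAlgebra

variable {M : VonNeumannAlgebra H} {S : Set (H →L[ℂ] H)} {x y : H →L[ℂ] H}

/-- The von Neumann algebra generated by `S`, that is, the bicommutant of `S ∪ S*`. -/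
def generatedBy (S : Set (H →L[ℂ] H)) : VonNeumannAlgebra H where
  toStarSubalgebra :=
    StarSubalgebra.centralizer ℂ (StarSubalgebra.centralizer ℂ S : Set (H →L[ℂ] H))
  centralizer_centralizer' := by
    simp [StarSubalgebra.coe_centralizer, Set.centralizer_centralizer_centralizer]

lemma coe_generatedBy :
    (generatedBy S : Set (H →L[ℂ] H)) = (S ∪ star S).centralizer.centralizer :=
  StarSubalgebra.coe_centralizer_centralizer ℂ S

lemma subset_generatedBy : S ⊆ generatedBy S := by
  rw [coe_generatedBy]
  exact Set.subset_union_left.trans Set.subset_centralizer_centralizer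

lemma generatedBy_subset (hS : S ⊆ M) : (generatedBy S : Set (H →L[ℂ] H)) ⊆ M := by
  have hSM : S ∪ star S ⊆ M := Set.union_subset hS fun x hx ↦ by
    simpa using star_mem (s := M) (hS hx)
  rw [coe_generatedBy, ← M.centralizer_centralizer]
  exact Set.centralizer_subset (Set.centralizer_subset hSM)

lemma commute_of_mem_generatedBy (hnormal : ∀ a ∈ S, IsStarNormal a)
    (hcomm : ∀ a ∈ S, ∀ b ∈ S, Commute a b) (hx : x ∈ generatedBy S) (hy : y ∈ generatedBy S) :
    Commute x y := by
  -- Fuglede's theorem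
  have hstar : ∀ a ∈ S, ∀ b ∈ S, Commute b (star a) := fun a ha b hb ↦
    (hnormal a ha).commute_star_right (hcomm b hb a ha)
  rw [← SetLike.mem_coe, coe_generatedBy] at hx hy
  exact Set.centralizer_centralizer_comm_of_comm
    (fun a ha b hb ↦ Set.union_star_self_comm (fun a ha b hb ↦ hcomm b hb a ha) hstar b hb a ha)
    x hx y hy

end GeneratedAlgebra

lemma le_of_mul_eq_of_le_one {A : Type*} [Ring A] [StarRing A] [PartialOrder A]
    [StarOrderedRing A] {a q : A} (hq : IsStarProjection q) (ha : IsSelfAdjoint a) (ha₁ : a ≤ 1)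
    (hqa : q * a = a) : a ≤ q := by
  have haq : a * q = a := by
    simpa only [star_mul, ha.star_eq, hq.isSelfAdjoint.star_eq] using congrArg star hqa
  have hconj := star_left_conjugate_le_conjugate ha₁ q
  rwa [hq.isSelfAdjoint.star_eq, hqa, haq, mul_one, hq.isIdempotentElem.eq] at hconj

end VNA

open VNA in
theorem statement_5_general {H : Type*} [NormedAddCommGroup H] [InnerProductSpace ℂ H]
    [CompleteSpace H] (M : VonNeumannAlgebra H) (τ : (H →L[ℂ] H) → ENNReal) (hτ : IsTrace M τ)
    {ι : Type*} [Finite ι] (α : ι → H →L[ℂ] H) (hαM : ∀ i, α i ∈ M)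
    (hnormal : ∀ i, IsStarNormal (α i)) (hcomm : ∀ i j, Commute (α i) (α j))
    {a : H →L[ℂ] H} (ha : a ∈ F1plus M τ) {ε : ℝ} (hε : 0 < ε) :
    ∃ q, IsTauFiniteProjection M τ q ∧ a ≤ q ∧ ∀ i, ‖q * α i - α i * q‖ ≤ ε := by
  obtain ⟨-, ha₀, ha₁, p, hp, hpa⟩ := ha
  have hNM : (generatedBy (Set.range α) : Set (H →L[ℂ] H)) ⊆ M :=
    generatedBy_subset (Set.range_subset_iff.2 hαM)
  have hNcomm {x y} (hx : x ∈ generatedBy (Set.range α)) (hy : y ∈ generatedBy (Set.range α)) :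
      Commute x y :=
    commute_of_mem_generatedBy (Set.forall_mem_range.2 hnormal)
      (Set.forall_mem_range.2 fun i ↦ Set.forall_mem_range.2 (hcomm i)) hx hy
  choose T hTproj hTfin hT using fun i ↦ exists_finite_projections_norm_commutator_le
    (subset_generatedBy (Set.mem_range_self (f := α) i)) hε
  have hTN : ∀ e ∈ ⋃ i, T i, e ∈ projections (generatedBy (Set.range α)) :=
    Set.iUnion_subset hTproj
  obtain ⟨q, hq, hqp, hqT⟩ := exists_isTauFiniteProjection_forall_commute hτ hp
    (Set.finite_iUnion hTfin) (fun e he ↦ hNM (hTN e he).1) (fun e he ↦ (hTN e he).2)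
    fun e he f hf ↦ hNcomm (hTN e he).1 (hTN f hf).1
  have hqa : q * a = a := by rw [← hpa, ← mul_assoc, hqp]
  exact ⟨q, hq, le_of_mul_eq_of_le_one hq.isStarProjection ha₀.isSelfAdjoint ha₁ hqa, fun i ↦
    hT i q (hq.isStarProjection.norm_le q) fun e he ↦ hqT e (Set.mem_iUnion_of_mem i he)⟩

open VNA in
/-- The quasicentral modulus of `α` relative to the uniform norm vanishes:
for every `a ∈ F₁⁺(M)` and `ε > 0` there is `r ∈ F₁⁺(M)` with `r ≥ a` and
`‖[r, α(j)]‖ ≤ ε` for all `j`. -/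
theorem statement_5 {H : Type*} [NormedAddCommGroup H] [InnerProductSpace ℂ H]
    [CompleteSpace H] (M : VonNeumannAlgebra H) (τ : (H →L[ℂ] H) → ENNReal)
    (hτ : IsFNSTrace M τ) (n : ℕ) (hn : 0 < n) (α : Fin n → (H →L[ℂ] H))
    (hα : IsCommutingSelfAdjointTuple M α) :
    ∀ a ∈ F1plus M τ, ∀ ε : ℝ, 0 < ε →
      ∃ r ∈ F1plus M τ, a ≤ r ∧ ∀ j, ‖r * α j - α j * r‖ ≤ ε := by
  intro a ha ε hε
  obtain ⟨q, hq, hq'⟩ := statement_5_general M τ hτ.isTrace α hα.1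
    (fun j ↦ IsSelfAdjoint.isStarNormal (hα.2.1 j)) hα.2.2 ha hε
  exact ⟨q, hq.mem_F1plus, hq'⟩
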